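/- Let n ≥ 1, m ≥ 1, let h₁, …, h_m be n×n complex matrices, and let σ ∈ S_m. Then the trace of the endomorphism (h₁ ⊗ ⋯ ⊗ h_m) ∘ π(σ) of (ℂ^n)^{⊗m} equals the product, over the cycles of σ, of the traces of the matrices multiplied along each cycle: for each cycle of σ of length k containing an element a, the corresponding factor is tr(h_a · h_{σ⁻¹(a)} · h_{σ⁻²(a)} ⋯ h_{σ^{-(k-1)}(a)}) (this factor is independent of the chosen element a of the cycle, by cyclic invariance of the trace). -/

import Mathlib

open scoped TensorProduct

/-- The permutation operator `π(σ)` on `(ℂ^n)^{⊗m}`, determined by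
`π(σ)(v₁ ⊗ ⋯ ⊗ v_m) = v_{σ⁻¹(1)} ⊗ ⋯ ⊗ v_{σ⁻¹(m)}`. -/
noncomputable def permMap (n m : ℕ) (σ : Equiv.Perm (Fin m)) :
    (⨂[ℂ] _ : Fin m, (Fin n → ℂ)) →ₗ[ℂ] ⨂[ℂ] _ : Fin m, (Fin n → ℂ) :=
  (PiTensorProduct.reindex ℂ (fun _ : Fin m => Fin n → ℂ) σ).toLinearMap

/-!
Expanding the trace in the basis of pure tensors gives `∑ f, ∏ a, h a (f a) (f (σ⁻¹ a))`, the sum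
ranging over all maps `f` from tensor positions to basis indices. Only positions in the same cycle
of `σ` share an index, so the sum factors over the cycles, and running backwards through a cycle
`a, σ⁻¹ a, σ⁻² a, …` turns its factor into the entrywise expansion of the trace of
`h a * h (σ⁻¹ a) * h (σ⁻² a) * ⋯`.
-/

section MatrixContraction

variable {R κ α β ι : Type*} [CommSemiring R] [Fintype κ]
  [Fintype α] [DecidableEq α] [Fintype β] [DecidableEq β] [Fintype ι] [DecidableEq ι]

/-- The scalar obtained from a family of square matrices by identifying, for every `a`, the column
index of `h a` with the row index of `h (τ a)`, and summing over all values of the indices.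
Traces of tensor products composed with permutation operators take this form. -/
def matrixContraction (h : α → Matrix κ κ R) (τ : α → α) : R :=
  ∑ f : α → κ, ∏ a, h a (f a) (f (τ a))

theorem matrixContraction_comp_equiv (e : β ≃ α) (h : α → Matrix κ κ R) {τ : α → α} {ρ : β → β}
    (hρ : Function.Semiconj e ρ τ) :
    matrixContraction (h ∘ e) ρ = matrixContraction h τ := by
  refine Fintype.sum_equiv (e.arrowCongr (Equiv.refl κ)) _ _ fun f => ?_
  rw [← e.prod_comp]
  simp [← hρ.eq]

theorem matrixContraction_sigma {B : ι → Type*} [∀ i, Fintype (B i)] [∀ i, DecidableEq (B i)]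
    (h : (Σ i, B i) → Matrix κ κ R) (τ : ∀ i, B i → B i) :
    matrixContraction h (Sigma.map id τ) = ∏ i, matrixContraction (fun b => h ⟨i, b⟩) (τ i) := by
  simp only [matrixContraction]
  rw [Finset.prod_univ_sum, Fintype.piFinset_univ]
  refine Fintype.sum_equiv (Equiv.piCurry fun i (_ : B i) => κ) _ _ fun f => ?_
  rw [Fintype.prod_sigma]
  rfl

variable [DecidableEq κ]

theorem matrix_prod_ofFn_apply {k : ℕ} (A : Fin (k + 1) → Matrix κ κ R) (x y : κ) :
    (List.ofFn A).prod x y = ∑ g : Fin k → κ,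
      ∏ j, A j (Fin.cons (α := fun _ => κ) x g j) (Fin.snoc (α := fun _ => κ) g y j) := by
  induction k generalizing x with
  | zero => simp [List.ofFn_succ, Fin.snoc]
  | succ k ih =>
    rw [List.ofFn_succ, List.prod_cons, Matrix.mul_apply, ← (Fin.consEquiv fun _ => κ).sum_comp,
      Fintype.sum_prod_type]
    refine Finset.sum_congr rfl fun z _ => ?_
    rw [ih, Finset.mul_sum]
    refine Finset.sum_congr rfl fun g _ => ?_
    have hsnoc : Fin.snoc (α := fun _ => κ) (Fin.consEquiv (fun _ => κ) (z, g)) y =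
        Fin.cons z (Fin.snoc g y) := (Fin.cons_snoc_eq_snoc_cons z g y).symm
    simp [Fin.prod_univ_succ (n := k + 1), hsnoc]

theorem matrixContraction_finRotate {k : ℕ} [NeZero k] (A : Fin k → Matrix κ κ R) :
    matrixContraction A (finRotate k) = (List.ofFn A).prod.trace := by
  obtain ⟨k, rfl⟩ := Nat.exists_eq_succ_of_ne_zero (NeZero.ne k)
  rw [matrixContraction, ← (Fin.consEquiv fun _ => κ).sum_comp, Fintype.sum_prod_type, Matrix.trace]
  refine Finset.sum_congr rfl fun x _ => ?_
  rw [Matrix.diag_apply, matrix_prod_ofFn_apply]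
  refine Finset.sum_congr rfl fun g _ => Finset.prod_congr rfl fun j _ => ?_
  refine congrArg (A j _) ?_
  induction j using Fin.lastCases <;> simp [Fin.coeSucc_eq_succ]

end MatrixContraction

section PermutationOperator

open Equiv

variable {R κ α M : Type*} [CommSemiring R] [AddCommMonoid M] [Module R M]
  [Fintype κ] [DecidableEq κ] [Fintype α] [DecidableEq α]

theorem trace_map_comp_reindex (b : Module.Basis κ R M) (f : α → M →ₗ[R] M) (σ : Perm α) :
    LinearMap.trace R _ (PiTensorProduct.map f ∘ₗ
        (PiTensorProduct.reindex R (fun _ => M) σ).toLinearMap) =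
      matrixContraction (fun a => LinearMap.toMatrix b b (f a)) ⇑σ⁻¹ := by
  rw [LinearMap.trace_eq_matrix_trace R (Basis.piTensorProduct fun _ => b), Matrix.trace,
    matrixContraction]
  refine Finset.sum_congr rfl fun p _ => ?_
  simp [LinearMap.toMatrix_apply]

end PermutationOperator

section Cycles

open Equiv Equiv.Perm

variable {R κ α ι : Type*} [CommSemiring R] [Fintype κ] [DecidableEq κ]

theorem pow_finRotate_apply_of_isCycleOn {σ : Perm α} {s : Finset α} {a : α} (hs : σ.IsCycleOn s)
    (ha : a ∈ s) (j : Fin s.card) : (σ ^ (finRotate _ j : ℕ)) a = σ ((σ ^ (j : ℕ)) a) := by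
  have : NeZero s.card := ⟨Finset.card_ne_zero_of_mem ha⟩
  rw [← mul_apply, ← pow_succ', hs.pow_apply_eq_pow_apply ha]
  simp [Nat.ModEq, Fin.val_add]

theorem bijective_pow_apply_of_isCycleOn {σ : Perm α} {s : ι → Finset α} {a : ι → α}
    (hσ : ∀ i, σ.IsCycleOn (s i)) (hs : ∀ x, ∃! i, x ∈ s i) (ha : ∀ i, a i ∈ s i) :
    Function.Bijective fun p : Σ i, Fin (s i).card => (σ ^ (p.2 : ℕ)) (a p.1) := by
  constructor
  · rintro ⟨i, j⟩ ⟨i', j'⟩ (hp : (σ ^ (j : ℕ)) (a i) = (σ ^ (j' : ℕ)) (a i'))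
    have mem_block (i) (j : ℕ) : (σ ^ j) (a i) ∈ s i :=
      ((hσ i).1.perm_pow j).mapsTo (ha i)
    obtain rfl := (hs _).unique (mem_block i j) (hp ▸ mem_block i' j')
    have hj := ((hσ i).pow_apply_eq_pow_apply (ha i)).1 hp
    rw [Fin.ext (hj.eq_of_lt_of_lt j.2 j'.2)]
  · intro x
    obtain ⟨i, hx, -⟩ := hs x
    obtain ⟨j, hj, rfl⟩ := (hσ i).exists_pow_eq (ha i) hx
    exact ⟨⟨i, j, hj⟩, rfl⟩

theorem matrixContraction_eq_prod_trace_of_isCycleOn [Fintype α] [DecidableEq α] [Fintype ι]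
    (h : α → Matrix κ κ R) {σ : Perm α} {s : ι → Finset α} {a : ι → α}
    (hσ : ∀ i, σ.IsCycleOn (s i)) (hs : ∀ x, ∃! i, x ∈ s i) (ha : ∀ i, a i ∈ s i) :
    matrixContraction h σ =
      ∏ i, (((List.range (s i).card).map fun j => h ((σ ^ j) (a i))).prod).trace := by
  classical
  let e : (Σ i, Fin (s i).card) ≃ α := .ofBijective _ (bijective_pow_apply_of_isCycleOn hσ hs ha)
  have he : Function.Semiconj e (Sigma.map id fun i => finRotate (s i).card) σ :=
    fun p => pow_finRotate_apply_of_isCycleOn (hσ p.1) (ha p.1) p.2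
  rw [← matrixContraction_comp_equiv e h he, matrixContraction_sigma]
  refine Finset.prod_congr rfl fun i _ => ?_
  have : NeZero (s i).card := ⟨Finset.card_ne_zero_of_mem (ha i)⟩
  rw [matrixContraction_finRotate, List.ofFn_eq_map, ← List.map_coe_finRange_eq_range, List.map_map]
  rfl

variable [Fintype α] [DecidableEq α] (σ : Perm α)

/-- The blocks of the partition of `α` into cycles of `σ`: the supports of the nontrivial cycles
and the singletons of the fixed points, kept apart because `cycleFactorsFinset` omits the latter. -/
def cycleBlock : σ.cycleFactorsFinset ⊕ {x // σ x = x} → Finset α :=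
  Sum.elim (fun c => c.1.support) (fun x => {x.1})

theorem isCycleOn_cycleBlock (i : σ.cycleFactorsFinset ⊕ {x // σ x = x}) :
    σ.IsCycleOn (cycleBlock σ i) := by
  rcases i with ⟨c, hc⟩ | ⟨x, hx⟩
  · obtain ⟨x, hx⟩ := (mem_cycleFactorsFinset_iff.mp hc).1.nonempty_support
    simpa [cycleBlock, cycle_is_cycleOf hx hc] using isCycleOn_support_cycleOf σ x
  · simpa [cycleBlock] using hx

theorem existsUnique_mem_cycleBlock (x : α) : ∃! i, x ∈ cycleBlock σ i := by
  by_cases hx : σ x = x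
  · refine ⟨.inr ⟨x, hx⟩, Finset.mem_singleton_self x, ?_⟩
    rintro (⟨c, hc⟩ | y) hy
    · exact absurd hx (mem_support.mp (mem_cycleFactorsFinset_support_le hc hy))
    · exact congrArg Sum.inr (Subtype.ext (Finset.mem_singleton.mp hy).symm)
  · have hcycle : σ.cycleOf x ∈ σ.cycleFactorsFinset :=
      cycleOf_mem_cycleFactorsFinset_iff.mpr (mem_support.mpr hx)
    refine ⟨.inl ⟨_, hcycle⟩, mem_support_cycleOf_iff.mpr ⟨.rfl, mem_support.mpr hx⟩, ?_⟩
    rintro (⟨c, hc⟩ | ⟨y, hy⟩) hxi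
    · exact congrArg Sum.inl (Subtype.ext (cycle_is_cycleOf hxi hc))
    · obtain rfl := Finset.mem_singleton.mp hxi
      exact absurd hy hx

theorem trace_tensor_comp_permMap_general (h : α → Matrix κ κ R) (a : σ.Basis) :
    LinearMap.trace R _ ((PiTensorProduct.map fun i => (h i).mulVecLin) ∘ₗ
        (PiTensorProduct.reindex R (fun _ => κ → R) σ).toLinearMap) =
      (∏ c ∈ σ.cycleFactorsFinset.attach,
          (((List.range c.1.support.card).map fun j => h ((σ ^ j)⁻¹ (a c))).prod).trace) *
        ∏ x with σ x = x, (h x).trace := by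
  let base : σ.cycleFactorsFinset ⊕ {x // σ x = x} → α := Sum.elim a (↑)
  have hbase (i) : base i ∈ cycleBlock σ i := by
    rcases i with c | x
    · exact a.mem_support_self c
    · exact Finset.mem_singleton_self _
  rw [trace_map_comp_reindex (Pi.basisFun R κ), matrixContraction_eq_prod_trace_of_isCycleOn _
    (fun i => (isCycleOn_cycleBlock σ i).inv) (existsUnique_mem_cycleBlock σ) hbase,
    Fintype.prod_sum_type, ← Finset.prod_subtype_eq_prod_filter, Finset.subtype_univ]
  simp [base, cycleBlock, ← Matrix.toLin'_apply', -coe_inv]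

end Cycles

/-- **Trace of `(h₁ ⊗ ⋯ ⊗ h_m) ∘ π(σ)` as a product over the cycles of `σ`.**
The factor of a (nontrivial) cycle `c` of `σ`, with least element `a` and length
`k = #supp(c)`, is `tr(h_a · h_{σ⁻¹(a)} ⋯ h_{σ^{-(k-1)}(a)})`; each fixed point `a` of `σ`
is a cycle of length one and contributes the factor `tr(h_a)`. -/
theorem trace_tensor_comp_permMap
    (n m : ℕ) (hn : 1 ≤ n) (hm : 1 ≤ m)
    (h : Fin m → Matrix (Fin n) (Fin n) ℂ) (σ : Equiv.Perm (Fin m)) :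
    LinearMap.trace ℂ _
        ((PiTensorProduct.map fun i => Matrix.mulVecLin (h i)) ∘ₗ permMap n m σ)
      = (∏ c ∈ σ.cycleFactorsFinset.attach,
          Matrix.trace
            (((List.range (c : Equiv.Perm (Fin m)).support.card).map fun j =>
              h ((σ ^ j)⁻¹
                ((c : Equiv.Perm (Fin m)).support.min'
                  (Equiv.Perm.IsCycle.nonempty_support
                    (Equiv.Perm.mem_cycleFactorsFinset_iff.mp c.2).1)))).prod))
        * ∏ a ∈ Finset.univ.filter fun a : Fin m => σ a = a, Matrix.trace (h a) := by
  exact trace_tensor_comp_permMap_general σ h ⟨_, fun c =>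
    c.1.support.min'_mem (Equiv.Perm.mem_cycleFactorsFinset_iff.mp c.2).1.nonempty_support⟩
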